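/- Let n ≥ 4 and let a be a semi-integer (2a ∈ ℤ, a ≠ 0). Then there exists a proper real algebraic subset B ⊊ ℝ^n (the common zero set of finitely many nonzero real polynomials) such that for every mass vector m = (m_1, …, m_n) ∈ ℝ^n \ B with all m_i > 0, there are only finitely many (n−2)-dimensional central configurations with masses m for the potential U_a up to symmetry; equivalently, the set of mutual-distance vectors (r_{ij})_{1≤i<j≤n} ∈ ℝ^{n(n−1)/2} of (n−2)-dimensional central configurations with masses m, exponent a, and multiplier normalized by λ = M, is finite. -/

import Mathlib

/-- The dimension of a configuration: the dimension of the smallest affine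
subspace containing the points. -/
noncomputable def confDim {d n : ℕ} (x : Fin n → EuclideanSpace ℝ (Fin d)) : ℕ :=
  Module.finrank ℝ (affineSpan ℝ (Set.range x)).direction

/-- `x` is a central configuration for the potential `U_a` (with `c2 = 2a ∈ ℤ`),
masses `m`, and multiplier `lam`. -/
def IsCentralConfig {d n : ℕ} (c2 : ℤ) (m : Fin n → ℝ) (lam : ℝ)
    (x : Fin n → EuclideanSpace ℝ (Fin d)) : Prop :=
  ∀ j : Fin n,
    (∑ i ∈ Finset.univ \ {j}, (m i * dist (x i) (x j) ^ c2) • (x i - x j))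
      + lam • (x j - (∑ i, m i)⁻¹ • ∑ i, m i • x i) = 0

/-- Index type for the mutual-distance coordinates `r_{ij}`, `1 ≤ i < j ≤ n`. -/
abbrev PairIdx (n : ℕ) := {p : Fin n × Fin n // p.1 < p.2}

/-- The set of mutual-distance vectors of `(n−2)`-dimensional central configurations
with masses `m`, exponent `2a = c2`, and multiplier normalized by `λ = M`. -/
def ccDistSet (n : ℕ) (c2 : ℤ) (m : Fin n → ℝ) : Set (PairIdx n → ℝ) :=
  {rv | ∃ x : Fin n → EuclideanSpace ℝ (Fin (n - 2)),
    Function.Injective x ∧ IsCentralConfig c2 m (∑ i, m i) x ∧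
    confDim x = n - 2 ∧ ∀ p : PairIdx n, rv p = dist (x p.1.1) (x p.1.2)}

/-!
The affine relations `∑ wᵢ = 0`, `∑ wᵢ xᵢ = 0` of an `(n - 2)`-dimensional configuration form a
line, spanned by a column of the adjugate of its Cayley–Menger matrix. With `wᵢ = zᵢ mᵢ` on this
line, a central configuration with `λ = M` satisfies Dziobek's equations `rᵢⱼ ^ (2a) = 1 + κ zᵢ zⱼ`,
and the Cayley–Menger determinant of the `rᵢⱼ` vanishes.

If some distance `r` and the masses `mᵢ` satisfied no polynomial relation valid for all solutions,
then `r` and the `mᵢ` would become algebraically independent in an ultraproduct of the solutions.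
There the distances are algebraic over `κ` and the `zᵢ`, and so is `mᵢ` whenever `zᵢ ≠ 0`. Counting
transcendence degrees, `κ` and the nonzero `zᵢ` are algebraically independent. But the vanishing of
the Cayley–Menger determinant is a nontrivial algebraic relation between them: it fails at `κ = 0`,
where all distances are `1`, and the `rᵢⱼ` are analytic on a star-shaped domain around this point,
so it cannot hold identically on one branch only.

Hence each distance is a root of a nonzero polynomial whose coefficients are polynomials in the
masses, and there are finitely many distances as soon as the leading coefficients do not vanish.
-/

open Filter Module MvPolynomial Topology
open scoped ContDiff nonZeroDivisors RealInnerProductSpace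

section Algebraic

variable {R S : Type*} [CommRing R] [CommRing S] [Algebra R S]

theorem isAlgebraic_of_units_zpow {s : Sˣ} {c : ℤ} (hc : c ≠ 0)
    (h : IsAlgebraic R ((s ^ c : Sˣ) : S)) : IsAlgebraic R (s : S) := by
  have hpos : 0 < c.natAbs := Int.natAbs_pos.2 hc
  obtain hc' | hc' := c.natAbs_eq
  · rw [hc', zpow_natCast, Units.val_pow_eq_pow_val] at h
    exact h.of_pow hpos
  · rw [hc', zpow_neg, zpow_natCast, ← inv_pow, Units.val_pow_eq_pow_val] at h
    let _ := (s⁻¹).invertible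
    simpa only [invOf_units, inv_inv] using (h.of_pow hpos).invOf

theorem isAlgebraic_of_zpow {L : Type*} [Field L] [Algebra R L] {x : L} {c : ℤ} (hx : x ≠ 0)
    (hc : c ≠ 0) (h : IsAlgebraic R (x ^ c)) : IsAlgebraic R x :=
  isAlgebraic_of_units_zpow (s := Units.mk0 x hx) hc (by simpa using h)

theorem isAlgebraic_mvPolynomial_aeval {K I : Type*} [CommRing K] [IsDomain R] [Algebra K R]
    [Algebra K S] [IsScalarTower K R S] {f : I → S} (hf : ∀ i, IsAlgebraic R (f i))
    (p : MvPolynomial I K) : IsAlgebraic R (aeval f p) := by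
  have hadjoin : Algebra.adjoin K (Set.range f) ≤
      (Subalgebra.algebraicClosure R S).restrictScalars K :=
    Algebra.adjoin_le (Set.range_subset_iff.2 hf)
  refine hadjoin ?_
  rw [Algebra.adjoin_range_eq_range_aeval]
  exact ⟨p, rfl⟩

theorem algebraicIndependent_of_isAlgebraic_adjoin {ι κ K L : Type*} [Fintype ι] [Fintype κ]
    [Field K] [Field L] [Algebra K L] {v : ι → L} {w : κ → L}
    (hcard : Fintype.card κ ≤ Fintype.card ι) (hv : AlgebraicIndependent K v)
    (hvw : ∀ i, IsAlgebraic (Algebra.adjoin K (Set.range w)) (v i)) :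
    AlgebraicIndependent K w := by
  let M := AlgebraicIndependent.matroid K L
  have hvM : M.Indep (Set.range v) := hv.coe_range
  have hsub : Set.range v ⊆ M.closure (Set.range w) := by
    rw [AlgebraicIndependent.matroid_closure_eq]
    exact Set.range_subset_iff.2 hvw
  have hwcard : (Set.range w).encard ≤ Fintype.card κ := by
    simpa [← Set.image_univ] using Set.encard_image_le w Set.univ
  have hrank : (Fintype.card κ : ℕ∞) ≤ M.eRk (Set.range w) := calc
    (Fintype.card κ : ℕ∞) ≤ Fintype.card ι := by exact_mod_cast hcard
    _ = (Set.range v).encard := by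
      rw [← Set.image_univ, hv.injective.encard_image, Set.encard_univ,
        ENat.card_eq_coe_fintype_card]
    _ ≤ M.eRk (M.closure (Set.range w)) := hvM.encard_le_eRk_of_subset hsub
    _ = M.eRk (Set.range w) := M.eRk_closure_eq _
  have hwM : M.Indep (Set.range w) :=
    (Matroid.indep_iff_eRk_eq_encard_of_finite (Set.finite_range w)).2 <|
      (M.eRk_le_encard _).antisymm (hwcard.trans hrank)
  have hinj : Function.Injective w := by
    refine Set.injOn_univ.1 (Set.Finite.injOn_of_encard_image_eq Set.finite_univ ?_)
    rw [Set.image_univ, Set.encard_univ, ENat.card_eq_coe_fintype_card]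
    exact hwcard.antisymm (hrank.trans (M.eRk_le_encard _))
  exact (algebraicIndependent_subtype_range hinj).1 hwM

end Algebraic

section Germ

variable {ι X K : Type*} [CommRing K]

/-- Germs of `K`-valued functions form a `K`-algebra through the constant functions. -/
noncomputable instance germAlgebra (l : Filter X) : Algebra K (Germ l K) where
  algebraMap := (Germ.coeRingHom l).comp (Pi.constRingHom X K)
  commutes' _ _ := mul_comm _ _
  smul_def' _ f := f.inductionOn fun _ ↦ rfl

theorem aeval_coe_germ (l : Filter X) (v : ι → X → K) (F : MvPolynomial ι K) :
    aeval (fun i ↦ (v i : Germ l K)) F = ((fun x ↦ eval (v · x) F : X → K) : Germ l K) := by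
  induction F using MvPolynomial.induction_on with
  | C c => simp only [algHom_C, eval_C]; rfl
  | add F G hF hG => simp only [map_add, hF, hG]; rfl
  | mul_X F i hF => simp only [map_mul, hF, aeval_X, eval_X]; rfl

theorem exists_ultrafilter_algebraicIndependent [IsDomain K] (v : ι → X → K)
    (hv : ∀ F : MvPolynomial ι K, F ≠ 0 → ∃ x, eval (v · x) F ≠ 0) :
    ∃ U : Ultrafilter X, AlgebraicIndependent K fun i ↦ (v i : Germ (U : Filter X) K) := by
  let l : Filter X := ⨅ F : {F : MvPolynomial ι K // F ≠ 0}, 𝓟 {x | eval (v · x) F.1 ≠ 0}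
  have hne : l.NeBot := by
    have : Nonempty {F : MvPolynomial ι K // F ≠ 0} := ⟨1, one_ne_zero⟩
    have : Nonempty X := ⟨(hv 1 one_ne_zero).choose⟩
    refine iInf_neBot_of_directed' ?_ fun F ↦ principal_neBot_iff.2 (hv F.1 F.2)
    refine fun F G ↦ ⟨⟨F * G, mul_ne_zero F.2 G.2⟩, principal_mono.2 fun x hx ↦ ?_,
      principal_mono.2 fun x hx ↦ ?_⟩ <;>
    rw [Set.mem_ofPred_eq, map_mul] at hx
    exacts [left_ne_zero_of_mul hx, right_ne_zero_of_mul hx]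
  refine ⟨Ultrafilter.of l, algebraicIndependent_iff.2 fun F hF ↦ ?_⟩
  by_contra hF0
  have hev : ∀ᶠ x in (Ultrafilter.of l : Filter X), eval (v · x) F ≠ 0 :=
    (Ultrafilter.of_le l).trans (iInf_le _ ⟨F, hF0⟩) (mem_principal_self _)
  rw [aeval_coe_germ] at hF
  obtain ⟨x, hx, hx0⟩ := (hev.and (Germ.coe_eq.1 hF)).exists
  exact hx hx0

end Germ

theorem exists_mvPolynomial_finite_of_forall_coord {σ τ K : Type*} [CommRing K] [IsDomain K]
    [Finite τ] (A : (σ → K) → Set (τ → K))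
    (hA : ∀ t, ∃ F : MvPolynomial (Option σ) K, F ≠ 0 ∧
      ∀ m, ∀ y ∈ A m, eval (fun o ↦ o.elim (y t) m) F = 0) :
    ∃ p : MvPolynomial σ K, p ≠ 0 ∧ ∀ m, eval m p ≠ 0 → (A m).Finite := by
  cases nonempty_fintype τ
  choose F hF hFA using hA
  let G (t : τ) : Polynomial (MvPolynomial σ K) := optionEquivLeft K σ (F t)
  have hG (t : τ) : G t ≠ 0 := by simpa [G] using hF t
  refine ⟨∏ t, (G t).leadingCoeff,
    Finset.prod_ne_zero_iff.2 fun t _ ↦ Polynomial.leadingCoeff_ne_zero.2 (hG t), fun m hm ↦ ?_⟩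
  rw [map_prod, Finset.prod_ne_zero_iff] at hm
  have hGm (t : τ) : (G t).map (eval m) ≠ 0 := fun h ↦ hm t (Finset.mem_univ t) <| by
    simpa using congrArg (Polynomial.coeff · (G t).natDegree) h
  refine (Set.Finite.pi' fun t ↦ Polynomial.finite_setOfPred_isRoot (hGm t)).subset fun y hy t ↦ ?_
  rw [Set.mem_ofPred_eq, Polynomial.IsRoot, ← optionEquivLeft_elim_eval]
  exact hFA t m y hy

section RealRoots

theorem mem_nonZeroDivisors_of_dense {X : Type*} [TopologicalSpace X] {f : C(X, ℝ)}
    (hf : Dense {x | f x ≠ 0}) : f ∈ C(X, ℝ)⁰ := by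
  refine mem_nonZeroDivisors_iff_right.2 fun g hg ↦ DFunLike.coe_injective ?_
  refine Continuous.ext_on hf g.continuous (0 : C(X, ℝ)).continuous fun x hx ↦ ?_
  exact (mul_eq_zero.1 (DFunLike.congr_fun hg x)).resolve_right hx

theorem dense_ne_zero_of_analyticOnNhd {E : Type*} [NormedAddCommGroup E] [NormedSpace ℝ E]
    {D : Set E} {f : E → ℝ} (hf : AnalyticOnNhd ℝ f D) (hDo : IsOpen D) (hD : IsPreconnected D)
    {y₀ : E} (hy₀ : y₀ ∈ D) (hfy₀ : f y₀ ≠ 0) : Dense {y : D | f y ≠ 0} := by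
  intro y
  rw [mem_closure_iff_frequently]
  by_contra h
  rw [not_frequently] at h
  have hzero : f =ᶠ[𝓝 (y : E)] 0 := by
    rw [← hDo.isOpenEmbedding_subtypeVal.map_nhds_eq]
    exact h.mono fun _ ↦ not_not.1
  exact hfy₀ (hf.eqOn_zero_of_preconnected_of_eventuallyEq_zero hD y.2 hzero hy₀)

theorem rpow_inv_of_zpow_eq {c : ℤ} (hc : c ≠ 0) {x y : ℝ} (hx : 0 < x) (h : x ^ c = y) :
    y ^ (c : ℝ)⁻¹ = x := by
  rw [← h, ← Real.rpow_intCast, Real.rpow_rpow_inv hx.le (Int.cast_ne_zero.2 hc)]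

theorem map_units_zpow {S L : Type*} [Monoid S] [DivisionMonoid L] (φ : S →* L) (s : Sˣ) (c : ℤ) :
    φ ((s ^ c : Sˣ) : S) = φ s ^ c := by
  rw [← Units.coe_map, map_zpow, Units.val_zpow_eq_zpow_val, Units.coe_map]

variable {τ : Type*}

/-- Polynomials act on continuous functions on `D ⊆ ℝ^τ` by restriction to `D`. -/
noncomputable instance mvPolynomialAlgebra (D : Set (τ → ℝ)) :
    Algebra (MvPolynomial τ ℝ) C(D, ℝ) :=
  (aeval fun t ↦ (⟨fun y ↦ y.1 t, (continuous_apply t).comp continuous_subtype_val⟩ :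
    C(D, ℝ))).toRingHom.toAlgebra

instance (D : Set (τ → ℝ)) : IsScalarTower ℝ (MvPolynomial τ ℝ) C(D, ℝ) :=
  IsScalarTower.of_algebraMap_eq fun c ↦ (AlgHom.commutes (aeval _) c).symm

theorem algebraMap_mvPolynomial_apply (D : Set (τ → ℝ)) (p : MvPolynomial τ ℝ) (y : D) :
    algebraMap (MvPolynomial τ ℝ) C(D, ℝ) p y = eval y.1 p :=
  comp_aeval_apply _ (ContinuousMap.evalAlgHom ℝ ℝ y) p

theorem isAlgebraic_of_zpow_eq_eval {D : Set (τ → ℝ)} {p : MvPolynomial τ ℝ}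
    {c : ℤ} (hc : c ≠ 0) {f : C(D, ℝ)} (hf : ∀ y, f y ≠ 0) (hfp : ∀ y, f y ^ c = eval y.1 p) :
    IsAlgebraic (MvPolynomial τ ℝ) f := by
  obtain ⟨s, rfl⟩ := (ContinuousMap.isUnit_iff_forall_ne_zero f).2 hf
  have hs : ((s ^ c : C(D, ℝ)ˣ) : C(D, ℝ)) = algebraMap (MvPolynomial τ ℝ) C(D, ℝ) p := by
    ext y
    rw [algebraMap_mvPolynomial_apply, ← hfp]
    exact map_units_zpow (ContinuousMap.evalAlgHom ℝ ℝ y : C(D, ℝ) →* ℝ) s c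
  exact isAlgebraic_of_units_zpow hc (hs ▸ isAlgebraic_algebraMap p)

theorem isOpen_forall_eval_pos {I : Type*} [Finite I] (u : I → MvPolynomial τ ℝ) :
    IsOpen {y | ∀ i, 0 < eval y (u i)} := by
  simp only [Set.ofPred_forall]
  exact isOpen_iInter_of_finite fun i ↦ isOpen_lt continuous_const (continuous_eval _)

theorem analyticAt_eval_rpow [Fintype τ] {y : τ → ℝ} (p : MvPolynomial τ ℝ)
    (hy : 0 < eval y p) (e : ℝ) : AnalyticAt ℝ (fun y ↦ eval y p ^ e) y :=
  (Real.contDiffAt_rpow_const_of_ne (n := ω) hy.ne').analyticAt.fun_comp (f := fun y ↦ eval y p)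
    (AnalyticOnNhd.eval_mvPolynomial p y trivial)

-- The positive roots `r i` of `u i` are analytic and algebraic over the polynomials on `D`, so
-- `G(r)` is algebraic and not a zero divisor in `C(D, ℝ)`: it divides a nonzero polynomial `q`.
theorem exists_mvPolynomial_of_eval_root_eq_zero [Finite τ] {I : Type*} [Finite I] {c : ℤ}
    (hc : c ≠ 0) {u : I → MvPolynomial τ ℝ} (hD : IsPreconnected {y | ∀ i, 0 < eval y (u i)})
    (G : MvPolynomial I ℝ) {y₀ : τ → ℝ} {r₀ : I → ℝ} (hr₀ : ∀ i, 0 < r₀ i)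
    (hu₀ : ∀ i, r₀ i ^ c = eval y₀ (u i)) (hG₀ : eval r₀ G ≠ 0) :
    ∃ q : MvPolynomial τ ℝ, q ≠ 0 ∧ ∀ y r, (∀ i, 0 < r i) → (∀ i, r i ^ c = eval y (u i)) →
      eval r G = 0 → eval y q = 0 := by
  cases nonempty_fintype τ
  let D := {y | ∀ i, 0 < eval y (u i)}
  let root (i : I) (y : τ → ℝ) : ℝ := eval y (u i) ^ (c : ℝ)⁻¹
  have hroot {y r} (hr : ∀ i, 0 < r i) (hu : ∀ i, r i ^ c = eval y (u i)) : (root · y) = r :=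
    funext fun i ↦ rpow_inv_of_zpow_eq hc (hr i) (hu i)
  have hanalytic (i : I) : AnalyticOnNhd ℝ (root i) D :=
    fun y hy ↦ analyticAt_eval_rpow _ (hy i) _
  let rootC (i : I) : C(D, ℝ) := ⟨fun y ↦ root i y, (hanalytic i).continuousOn.domRestrict⟩
  have hrootC (i : I) : IsAlgebraic (MvPolynomial τ ℝ) (rootC i) := by
    refine isAlgebraic_of_zpow_eq_eval (p := u i) hc (fun y ↦ (Real.rpow_pos_of_pos (y.2 i) _).ne')
      fun y ↦ ?_
    rw [← Real.rpow_intCast]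
    exact Real.rpow_inv_rpow (y.2 i).le (Int.cast_ne_zero.2 hc)
  have hGroot (y : D) : aeval rootC G y = eval (root · y) G :=
    comp_aeval_apply _ (ContinuousMap.evalAlgHom ℝ ℝ y) G
  have hdense : Dense {y : D | eval (root · y) G ≠ 0} :=
    dense_ne_zero_of_analyticOnNhd (AnalyticOnNhd.aeval_mvPolynomial (f := fun y i ↦ root i y)
      hanalytic G) (isOpen_forall_eval_pos u) hD (fun i ↦ hu₀ i ▸ zpow_pos (hr₀ i) c)
      (by rwa [← hroot hr₀ hu₀] at hG₀)
  obtain ⟨q, hq, g, hg⟩ := (isAlgebraic_mvPolynomial_aeval hrootC G).exists_nonzero_dvd <|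
    mem_nonZeroDivisors_of_dense (by simpa only [hGroot] using hdense)
  refine ⟨q, hq, fun y r hr hu hG ↦ ?_⟩
  have hy : y ∈ D := fun i ↦ hu i ▸ zpow_pos (hr i) c
  rw [← algebraMap_mvPolynomial_apply D q ⟨y, hy⟩, hg, ContinuousMap.mul_apply, hGroot,
    hroot hr hu, hG, zero_mul]

end RealRoots

section KernelAdjugate

open Matrix

variable {ι K : Type*} [Fintype ι] [DecidableEq ι] [Field K] {B : Matrix ι ι K}

theorem mulVec_col_adjugate (hB : B.det = 0) (j : ι) : B *ᵥ B.adjugate.col j = 0 := by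
  have h := congrArg (·.col j) (mul_adjugate B)
  rw [hB, zero_smul] at h
  exact h

theorem exists_adjugate_ne_zero (hB : B.IsSymm) (hker : finrank K (LinearMap.ker B.mulVecLin) = 1) :
    ∃ j, B.adjugate j j ≠ 0 := by
  obtain ⟨⟨v, hv⟩, hv0, hspan⟩ := finrank_eq_one_iff'.1 hker
  replace hv : B *ᵥ v = 0 := hv
  obtain ⟨j, hj⟩ : ∃ j, v j ≠ 0 := Function.ne_iff.1 fun h ↦ hv0 (Subtype.ext h)
  refine ⟨j, fun hadj ↦ ?_⟩
  rw [adjugate_apply] at hadj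
  obtain ⟨u, hu0, hu⟩ := exists_mulVec_eq_zero_iff.2 hadj
  have huj : u j = 0 := by simpa [mulVec, updateRow_self] using congrFun hu j
  have hBu_ne (i : ι) (hi : i ≠ j) : (B *ᵥ u) i = 0 := by
    simpa [mulVec, updateRow_ne hi] using congrFun hu i
  -- By symmetry `v ⬝ᵥ B *ᵥ u = 0`, and only its `j`-th term can be nonzero.
  have hBu_j : (B *ᵥ u) j = 0 := by
    have h : v ⬝ᵥ B *ᵥ u = 0 := by
      rw [dotProduct_mulVec, ← mulVec_transpose, hB.eq, hv, zero_dotProduct]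
    rw [dotProduct, Fintype.sum_eq_single j fun i hi ↦ by rw [hBu_ne i hi, mul_zero]] at h
    exact (mul_eq_zero.1 h).resolve_left hj
  have hBu : B *ᵥ u = 0 := funext fun i ↦ by
    obtain rfl | hi := eq_or_ne i j
    exacts [hBu_j, hBu_ne i hi]
  obtain ⟨c, hc⟩ := hspan ⟨u, hBu⟩
  obtain rfl : c • v = u := congrArg Subtype.val hc
  have hc : c = 0 := (mul_eq_zero.1 huj).resolve_right hj
  exact hu0 (by rw [hc, zero_smul])

end KernelAdjugate

section CayleyMenger

open Matrix

variable {ι R R' : Type*} [CommRing R] [CommRing R']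

/-- The Cayley–Menger matrix of the numbers `r i j`, thought of as mutual distances: the matrix of
their squares, bordered by a row and a column of ones with a zero in the corner. -/
def cayleyMenger (r : ι → ι → R) : Matrix (Unit ⊕ ι) (Unit ⊕ ι) R :=
  fromBlocks 0 (of fun _ _ ↦ 1) (of fun _ _ ↦ 1) (of fun i j ↦ r i j ^ 2)

theorem map_cayleyMenger (φ : R →+* R') (r : ι → ι → R) :
    (cayleyMenger r).map φ = cayleyMenger fun i j ↦ φ (r i j) := by
  ext (i | i) (j | j) <;> simp [cayleyMenger]

theorem isSymm_cayleyMenger {r : ι → ι → R} (hr : ∀ i j, r i j = r j i) :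
    (cayleyMenger r).IsSymm :=
  IsSymm.fromBlocks (by ext; rfl) (by ext; rfl) (by ext i j; exact congrArg (· ^ 2) (hr j i))

variable [Fintype ι]

theorem cayleyMenger_mulVec (r : ι → ι → R) (v : Unit ⊕ ι → R) :
    cayleyMenger r *ᵥ v =
      Sum.elim (fun _ ↦ ∑ j, v (.inr j)) fun i ↦ v (.inl ()) + ∑ j, r i j ^ 2 * v (.inr j) := by
  ext (i | i) <;> simp [cayleyMenger, mulVec, dotProduct]

variable [DecidableEq ι]

theorem map_det_cayleyMenger (φ : R →+* R') (r : ι → ι → R) :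
    φ (cayleyMenger r).det = (cayleyMenger fun i j ↦ φ (r i j)).det := by
  rw [RingHom.map_det, RingHom.mapMatrix_apply, map_cayleyMenger]

theorem map_adjugate_cayleyMenger (φ : R →+* R') (r : ι → ι → R) (i j : Unit ⊕ ι) :
    φ ((cayleyMenger r).adjugate i j) = (cayleyMenger fun i j ↦ φ (r i j)).adjugate i j := by
  rw [← map_cayleyMenger, ← RingHom.mapMatrix_apply, ← RingHom.map_adjugate]
  rfl

theorem adjugate_cayleyMenger_mem (A : Subring R) {r : ι → ι → R} (hr : ∀ i j, r i j ∈ A)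
    (i j : Unit ⊕ ι) : (cayleyMenger r).adjugate i j ∈ A := by
  have h := map_adjugate_cayleyMenger A.subtype (fun i j ↦ ⟨r i j, hr i j⟩) i j
  exact h ▸ SetLike.coe_mem _

theorem det_cayleyMenger_simplex_ne_zero {K : Type*} [Field K] [CharZero K] [Nonempty ι] :
    (cayleyMenger fun i j : ι ↦ if i = j then (0 : K) else 1).det ≠ 0 := by
  intro hdet
  obtain ⟨v, hv0, hv⟩ := exists_mulVec_eq_zero_iff.2 hdet
  rw [cayleyMenger_mulVec] at hv
  have hsum : ∑ j, v (.inr j) = 0 := congrFun hv (.inl ())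
  have hinr (i : ι) : v (.inr i) = v (.inl ()) := by
    have hrow : v (.inl ()) + ∑ j, (if i = j then (0 : K) else 1) ^ 2 * v (.inr j) = 0 :=
      congrFun hv (.inr i)
    have hoff : ∑ j, (if i = j then (0 : K) else 1) ^ 2 * v (.inr j) =
        ∑ j, v (.inr j) - v (.inr i) := by
      simp [ite_pow, ite_mul, Finset.sum_ite, Finset.filter_ne, Finset.sum_erase_eq_sub]
    linear_combination hoff + hsum - hrow
  have hinl : v (.inl ()) = 0 := by simpa [hinr] using hsum
  refine hv0 (funext ?_)
  rintro (_ | i)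
  exacts [hinl, (hinr i).trans hinl]

end CayleyMenger

section AffineRelations

variable {ι K E : Type*} [Fintype ι] [Field K] [AddCommGroup E] [Module K E] {x : ι → E}
  {w : ι → K}

variable (K) in
/-- The space of affine relations between the points `x i`: the weights `w` of total weight zero
with `∑ i, w i • x i = 0`. -/
def affineRelations (x : ι → E) : Submodule K (ι → K) :=
  LinearMap.ker (Fintype.linearCombination K fun _ : ι ↦ (1 : K)) ⊓
    LinearMap.ker (Fintype.linearCombination K x)

theorem mem_affineRelations : w ∈ affineRelations K x ↔ ∑ i, w i = 0 ∧ ∑ i, w i • x i = 0 := by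
  simp [affineRelations, Fintype.linearCombination_apply]

theorem map_ker_linearCombination_eq_vectorSpan (x : ι → E) :
    (LinearMap.ker (Fintype.linearCombination K fun _ : ι ↦ (1 : K))).map
      (Fintype.linearCombination K x) = vectorSpan K (Set.range x) := by
  classical
  refine le_antisymm ?_ (Submodule.span_le.2 ?_)
  · rintro _ ⟨w, hw, rfl⟩
    have hw' : ∑ i, w i = 0 := by simpa [Fintype.linearCombination_apply] using hw
    rw [Fintype.linearCombination_apply,
      ← Finset.univ.weightedVSub_eq_linear_combination hw']
    exact weightedVSub_mem_vectorSpan hw' x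
  · rintro _ ⟨_, ⟨i, rfl⟩, _, ⟨j, rfl⟩, rfl⟩
    exact ⟨Pi.single i 1 - Pi.single j 1, by simp, by simp⟩

theorem finrank_affineRelations_add_finrank_vectorSpan_add_one [Nonempty ι] (x : ι → E) :
    finrank K (affineRelations K x) + finrank K (vectorSpan K (Set.range x)) + 1
      = Fintype.card ι := by
  classical
  set total := Fintype.linearCombination K fun _ : ι ↦ (1 : K)
  set comb := Fintype.linearCombination K x
  have htotal : total ≠ 0 := fun h ↦ one_ne_zero (α := K) <| by
    simpa [total] using LinearMap.congr_fun h (Pi.single (Classical.arbitrary ι) 1)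
  have hker : finrank K (LinearMap.ker (comb.domRestrict (LinearMap.ker total))) =
      finrank K (affineRelations K x) := by
    rw [LinearMap.ker_domRestrict, ← Submodule.finrank_map_subtype_eq, Submodule.map_comap_subtype]
    rfl
  rw [add_comm (finrank K (affineRelations K x)), ← hker, ← map_ker_linearCombination_eq_vectorSpan,
    ← LinearMap.range_domRestrict, LinearMap.finrank_range_add_finrank_ker,
    Dual.finrank_ker_add_one_of_ne_zero htotal, finrank_fintype_fun_eq_card]

theorem exists_mem_affineRelations_of_sum_smul_sub_eq_zero [DecidableEq ι] {j : ι}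
    (h : ∑ i ∈ Finset.univ \ {j}, w i • (x i - x j) = 0) :
    ∃ u ∈ affineRelations K x, ∀ i, i ≠ j → u i = w i := by
  let u : ι → K := Function.update w j (-∑ i ∈ Finset.univ \ {j}, w i)
  have hu (i : ι) (hi : i ≠ j) : u i = w i := Function.update_of_ne hi _ w
  have huw (i : ι) (hi : i ∈ Finset.univ \ {j}) : u i = w i := hu i (by simpa using hi)
  have huj : u j = -∑ i ∈ Finset.univ \ {j}, w i := Function.update_self ..
  refine ⟨u, mem_affineRelations.2 ⟨?_, ?_⟩, hu⟩
  · rw [Finset.sum_eq_sum_sdiff_singleton_add (Finset.mem_univ j), huj, Finset.sum_congr rfl huw,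
      add_neg_cancel]
  · rw [Finset.sum_eq_sum_sdiff_singleton_add (Finset.mem_univ j), huj,
      Finset.sum_congr rfl fun i hi ↦ congrArg (· • x i) (huw i hi), neg_smul, ← sub_eq_add_neg,
      Finset.sum_smul, ← Finset.sum_sub_distrib, ← h]
    simp only [smul_sub]

end AffineRelations

section CayleyMengerDist

open Matrix

variable {ι E : Type*} [Fintype ι] [NormedAddCommGroup E] [InnerProductSpace ℝ E] {x : ι → E}

theorem sum_dist_sq_mul {w : ι → ℝ} (hw : ∑ i, w i = 0) (x : ι → E) (y : E) :
    ∑ j, dist y (x j) ^ 2 * w j = ∑ j, w j * ‖x j‖ ^ 2 - 2 * ⟪y, ∑ j, w j • x j⟫ := by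
  have h (j : ι) :
      dist y (x j) ^ 2 * w j = ‖y‖ ^ 2 * w j + w j * ‖x j‖ ^ 2 - 2 * ⟪y, w j • x j⟫ := by
    rw [dist_eq_norm, norm_sub_sq_real, real_inner_smul_right]
    ring
  simp only [h, Finset.sum_add_distrib, Finset.sum_sub_distrib, ← Finset.mul_sum, inner_sum, hw]
  ring

theorem sum_smul_eq_zero_of_inner_eq {w : ι → ℝ} (hw : ∑ i, w i = 0) {c : ℝ}
    (h : ∀ i, ⟪x i, ∑ j, w j • x j⟫ = c) : ∑ j, w j • x j = 0 := by
  refine inner_self_eq_zero (𝕜 := ℝ).1 ?_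
  nth_rw 1 [sum_inner]
  simp only [real_inner_smul_left, h, ← Finset.sum_mul, hw, zero_mul]

theorem cayleyMenger_dist_mulVec_eq_zero_iff [Nonempty ι] {v : Unit ⊕ ι → ℝ} :
    cayleyMenger (fun i j ↦ dist (x i) (x j)) *ᵥ v = 0 ↔
      v ∘ .inr ∈ affineRelations ℝ x ∧ v (.inl ()) = -∑ j, v (.inr j) * ‖x j‖ ^ 2 := by
  simp only [cayleyMenger_mulVec, mem_affineRelations, funext_iff, Sum.forall, Sum.elim_inl,
    Sum.elim_inr, Pi.zero_apply, Function.comp_apply, forall_const]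
  constructor
  · rintro ⟨hsum, hrow⟩
    simp only [sum_dist_sq_mul hsum] at hrow
    have hmoment : ∑ j, v (.inr j) • x j = 0 :=
      sum_smul_eq_zero_of_inner_eq hsum
        (c := (v (.inl ()) + ∑ j, v (.inr j) * ‖x j‖ ^ 2) / 2) fun i ↦ by
          linear_combination -hrow i / 2
    refine ⟨⟨hsum, hmoment⟩, ?_⟩
    have hrow₀ := hrow (Classical.arbitrary ι)
    rw [hmoment, inner_zero_right] at hrow₀
    linear_combination hrow₀
  · rintro ⟨⟨hsum, hmoment⟩, hinl⟩
    refine ⟨hsum, fun i ↦ ?_⟩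
    rw [sum_dist_sq_mul hsum, hmoment, hinl, inner_zero_right]
    ring

variable (x) in
/-- The kernel of the Cayley–Menger matrix of a configuration is its space of affine relations:
the border coordinate is determined by the others. -/
noncomputable def cayleyMengerKerEquiv [Nonempty ι] :
    LinearMap.ker (cayleyMenger fun i j ↦ dist (x i) (x j)).mulVecLin ≃ₗ[ℝ]
      affineRelations ℝ x where
  toFun v := ⟨v.1 ∘ .inr, (cayleyMenger_dist_mulVec_eq_zero_iff.1 v.2).1⟩
  invFun w := ⟨Sum.elim (fun _ ↦ -∑ j, w.1 j * ‖x j‖ ^ 2) w.1,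
    cayleyMenger_dist_mulVec_eq_zero_iff.2 ⟨w.2, rfl⟩⟩
  map_add' _ _ := rfl
  map_smul' _ _ := rfl
  left_inv v := by
    ext (_ | i)
    exacts [(cayleyMenger_dist_mulVec_eq_zero_iff.1 v.2).2.symm, rfl]
  right_inv _ := rfl

variable [DecidableEq ι] [Nonempty ι]

theorem det_cayleyMenger_dist_eq_zero (hx : finrank ℝ (affineRelations ℝ x) = 1) :
    (cayleyMenger fun i j ↦ dist (x i) (x j)).det = 0 := by
  by_contra h
  have hinj := mulVec_injective_of_isUnit ((isUnit_iff_isUnit_det _).2 (isUnit_iff_ne_zero.2 h))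
  rw [← (cayleyMengerKerEquiv x).finrank_eq, LinearMap.ker_eq_bot.2 hinj, finrank_bot] at hx
  exact zero_ne_one hx

theorem exists_affineRelations_eq_span_adjugate (hx : finrank ℝ (affineRelations ℝ x) = 1) :
    ∃ j, affineRelations ℝ x =
      ℝ ∙ fun i ↦ (cayleyMenger fun i j ↦ dist (x i) (x j)).adjugate (.inr i) j := by
  obtain ⟨j, hj⟩ := exists_adjugate_ne_zero (isSymm_cayleyMenger fun _ _ ↦ dist_comm _ _)
    ((cayleyMengerKerEquiv x).finrank_eq.trans hx)
  obtain ⟨hmem, hinl⟩ := cayleyMenger_dist_mulVec_eq_zero_iff.1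
    (mulVec_col_adjugate (det_cayleyMenger_dist_eq_zero hx) j)
  refine ⟨j, (Submodule.eq_of_le_of_finrank_eq ?_ ?_).symm⟩
  · exact (Submodule.span_singleton_le_iff_mem _ _).2 hmem
  · rw [finrank_span_singleton fun h ↦ hj ?_, hx]
    obtain _ | i := j
    · simpa only [col_apply, congrFun h, Pi.zero_apply, zero_mul, Finset.sum_const_zero, neg_zero]
        using hinl
    · exact congrFun h i

end CayleyMengerDist

section Dziobek

/-- The Dziobek equations for masses `m` and exponent `c` in the unknowns `z`, `κ` and `r`, the
mutual distances `r i j` being normalized by `λ = M`. The relations `z i * m i` span the affine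
relations of the configuration, so they are the entries of a column of the adjugate of the
Cayley–Menger matrix. The equations make sense over any field. -/
structure IsDziobekSolution {ι K : Type*} [Fintype ι] [DecidableEq ι] [Field K] (c : ℤ)
    (m z : ι → K) (κ : K) (r : ι → ι → K) : Prop where
  self_eq_zero i : r i i = 0
  ne_zero {i j} : i ≠ j → r i j ≠ 0
  zpow_eq {i j} : i ≠ j → r i j ^ c = 1 + κ * z i * z j
  det_eq_zero : (cayleyMenger r).det = 0
  exists_adjugate : ∃ j, ∀ i, z i * m i = (cayleyMenger r).adjugate (.inr i) j

theorem exists_eq_mul_mul_of_symm {ι K : Type*} [Field K] {A : ι → ι → K} {c z : ι → K}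
    (hA : ∀ i j, A i j = A j i) (h : ∀ i j, i ≠ j → A i j = c j * z i) :
    ∃ κ, ∀ i j, i ≠ j → A i j = κ * z i * z j := by
  obtain rfl | hz := eq_or_ne z 0
  · exact ⟨0, fun i j hij ↦ by simpa using h i j hij⟩
  obtain ⟨a, ha⟩ := Function.ne_iff.1 hz
  have hc (j : ι) : c j = c a / z a * z j := by
    obtain rfl | hj := eq_or_ne j a
    · exact (div_mul_cancel₀ _ ha).symm
    · rw [div_mul_eq_mul_div, ← h j a hj, hA, h a j hj.symm, mul_div_cancel_right₀ _ ha]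
  exact ⟨c a / z a, fun i j hij ↦ by rw [h i j hij, hc]; ring⟩

namespace IsCentralConfig

open Finset

variable {d n : ℕ} {c : ℤ} {m : Fin n → ℝ} {lam : ℝ} {x : Fin n → EuclideanSpace ℝ (Fin d)}

theorem sum_smul_sub_eq_zero (hx : IsCentralConfig c m lam x) (hM : ∑ i, m i ≠ 0) (j : Fin n) :
    ∑ i ∈ univ \ {j}, (m i * (dist (x i) (x j) ^ c - lam / ∑ i, m i)) • (x i - x j) = 0 := by
  have hcenter : lam • (x j - (∑ i, m i)⁻¹ • ∑ i, m i • x i) =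
      -∑ i ∈ univ \ {j}, (m i * (lam / ∑ i, m i)) • (x i - x j) := calc
    _ = -((lam / ∑ i, m i) • ∑ i, m i • (x i - x j)) := by
      simp only [smul_sub, sum_sub_distrib, ← sum_smul]
      match_scalars <;> field_simp
    _ = -((lam / ∑ i, m i) • ∑ i ∈ univ \ {j}, m i • (x i - x j)) := by
      rw [sum_subset (subset_univ (univ \ {j})) fun i _ hi ↦ ?_]
      rw [show i = j by simpa using hi, sub_self, smul_zero]
    _ = _ := by simp only [smul_sum, smul_smul, mul_comm]
  have h := hx j
  rw [hcenter, ← sub_eq_add_neg, ← sum_sub_distrib] at h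
  simpa only [mul_sub, sub_smul] using h

theorem exists_dist_zpow_eq (hx : IsCentralConfig c m lam x) (hm : ∀ i, m i ≠ 0)
    (hM : ∑ i, m i ≠ 0) {Δ : Fin n → ℝ} (hΔ : affineRelations ℝ x = ℝ ∙ Δ) :
    ∃ κ, ∀ i j, i ≠ j →
      dist (x i) (x j) ^ c = lam / ∑ i, m i + κ * (Δ i / m i) * (Δ j / m j) := by
  have hprop (j : Fin n) :
      ∃ a, ∀ i, i ≠ j → dist (x i) (x j) ^ c - lam / ∑ i, m i = a * (Δ i / m i) := by
    obtain ⟨u, hu, huj⟩ :=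
      exists_mem_affineRelations_of_sum_smul_sub_eq_zero (hx.sum_smul_sub_eq_zero hM j)
    rw [hΔ] at hu
    obtain ⟨a, rfl⟩ := Submodule.mem_span_singleton.1 hu
    refine ⟨a, fun i hij ↦ ?_⟩
    rw [← mul_div_assoc, eq_div_iff (hm i), mul_comm, ← huj i hij, Pi.smul_apply, smul_eq_mul]
  choose a ha using hprop
  obtain ⟨κ, hκ⟩ := exists_eq_mul_mul_of_symm
    (A := fun i j ↦ dist (x i) (x j) ^ c - lam / ∑ i, m i) (fun i j ↦ by rw [dist_comm])
    fun i j hij ↦ ha j i hij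
  exact ⟨κ, fun i j hij ↦ sub_eq_iff_eq_add'.1 (hκ i j hij)⟩

theorem exists_isDziobekSolution (hx : IsCentralConfig c m (∑ i, m i) x)
    (hinj : Function.Injective x) (hdim : confDim x + 2 = n) (hm : ∀ i, m i ≠ 0)
    (hM : ∑ i, m i ≠ 0) :
    ∃ z κ, IsDziobekSolution c m z κ fun i j ↦ dist (x i) (x j) := by
  have : Nonempty (Fin n) := ⟨⟨0, by omega⟩⟩
  have hrel : finrank ℝ (affineRelations ℝ x) = 1 := by
    have h := finrank_affineRelations_add_finrank_vectorSpan_add_one (K := ℝ) x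
    rw [← direction_affineSpan, Fintype.card_fin] at h
    unfold confDim at hdim
    omega
  obtain ⟨j, hspan⟩ := exists_affineRelations_eq_span_adjugate hrel
  obtain ⟨κ, hκ⟩ := hx.exists_dist_zpow_eq hm hM hspan
  exact ⟨_, κ, fun i ↦ dist_self _, fun hij ↦ dist_ne_zero.2 (hinj.ne hij),
    fun hij ↦ by rw [hκ _ _ hij, div_self hM], det_cayleyMenger_dist_eq_zero hrel, j,
    fun i ↦ div_mul_cancel₀ _ (hm i)⟩

end IsCentralConfig

end Dziobek

section DziobekPolynomial

variable {ι : Type*} (S : Set ι) [DecidablePred (· ∈ S)]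

/-- The coordinate `z i` as a polynomial in `κ` (the variable `none`) and the `z s`, `s ∈ S`, the
coordinates outside `S` being set to zero. -/
noncomputable def dziobekCoord (i : ι) : MvPolynomial (Option S) ℝ :=
  if h : i ∈ S then X (some ⟨i, h⟩) else 0

/-- The right-hand side `1 + κ z_i z_j` of the Dziobek equations as a polynomial in `κ` (the
variable `none`) and the `z s`, `s ∈ S`. -/
noncomputable def dziobekPolynomial (i j : ι) : MvPolynomial (Option S) ℝ :=
  1 + X none * dziobekCoord S i * dziobekCoord S j

variable {S}

theorem eval_dziobekCoord {z : ι → ℝ} (hz : ∀ i ∉ S, z i = 0) (κ : ℝ) (i : ι) :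
    eval (fun o ↦ o.elim κ fun s : S ↦ z s) (dziobekCoord S i) = z i := by
  unfold dziobekCoord
  split_ifs with hi
  · exact eval_X _
  · rw [map_zero, hz i hi]

theorem eval_smul_dziobekCoord (t : ℝ) (y : Option S → ℝ) (i : ι) :
    eval (t • y) (dziobekCoord S i) = t * eval y (dziobekCoord S i) := by
  unfold dziobekCoord
  split_ifs <;> simp

theorem eval_dziobekPolynomial {z : ι → ℝ} (hz : ∀ i ∉ S, z i = 0) (κ : ℝ) (i j : ι) :
    eval (fun o ↦ o.elim κ fun s : S ↦ z s) (dziobekPolynomial S i j) = 1 + κ * z i * z j := by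
  simp only [dziobekPolynomial, map_add, map_one, map_mul, eval_X, Option.elim_none,
    eval_dziobekCoord hz]

theorem eval_smul_dziobekPolynomial (t : ℝ) (y : Option S → ℝ) (i j : ι) :
    eval (t • y) (dziobekPolynomial S i j) =
      (1 - t ^ 3) + t ^ 3 * eval y (dziobekPolynomial S i j) := by
  simp only [dziobekPolynomial, map_add, map_one, map_mul, eval_X, eval_smul_dziobekCoord,
    Pi.smul_apply, smul_eq_mul]
  ring

theorem eval_zero_dziobekPolynomial (i j : ι) : eval 0 (dziobekPolynomial S i j) = 1 := by
  simpa using eval_smul_dziobekPolynomial (S := S) 0 0 i j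

variable (S) in
theorem isPreconnected_dziobekPolynomial_pos :
    IsPreconnected
      {y | ∀ p : {p : ι × ι // p.1 ≠ p.2}, 0 < eval y (dziobekPolynomial S p.1.1 p.1.2)} := by
  refine (StarConvex.isPathConnected (a := 0) ?_ ?_).isConnected.isPreconnected
  · refine starConvex_zero_iff.2 fun y hy t ht₀ ht₁ p ↦ ?_
    rw [eval_smul_dziobekPolynomial]
    obtain rfl | ht := ht₀.eq_or_lt
    · norm_num
    · exact add_pos_of_nonneg_of_pos (sub_nonneg.2 (pow_le_one₀ ht₀ ht₁))
        (mul_pos (pow_pos ht 3) (hy p))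
  · exact fun p ↦ by rw [eval_zero_dziobekPolynomial]; exact one_pos

end DziobekPolynomial

section Elimination

variable {ι : Type*} [Fintype ι] [DecidableEq ι]

theorem exists_mvPolynomial_eval_eq_det_cayleyMenger :
    ∃ G : MvPolynomial {p : ι × ι // p.1 ≠ p.2} ℝ, ∀ r : ι → ι → ℝ, (∀ i, r i i = 0) →
      eval (fun p ↦ r p.1.1 p.1.2) G = (cayleyMenger r).det := by
  refine ⟨(cayleyMenger fun i j ↦ if h : i = j then 0 else X ⟨(i, j), h⟩).det, fun r hr ↦ ?_⟩
  rw [map_det_cayleyMenger]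
  refine congrArg (fun r ↦ (cayleyMenger r).det) (funext₂ fun i j ↦ ?_)
  split_ifs with hij
  · rw [hij, hr, map_zero]
  · exact eval_X _

-- At `κ = 0`, `z = 0` all distances are `1`, and the Cayley–Menger determinant of the regular
-- simplex does not vanish: the vanishing of the determinant constrains `(κ, z)`.
theorem exists_mvPolynomial_of_isDziobekSolution [Nonempty ι] {c : ℤ} (hc : c ≠ 0) (S : Set ι) :
    ∃ q : MvPolynomial (Option S) ℝ, q ≠ 0 ∧ ∀ m z κ r, IsDziobekSolution c m z κ r →
      (∀ i j, 0 ≤ r i j) → (∀ i ∉ S, z i = 0) →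
      eval (fun o ↦ o.elim κ fun s : S ↦ z s) q = 0 := by
  classical
  obtain ⟨G, hG⟩ := exists_mvPolynomial_eval_eq_det_cayleyMenger (ι := ι)
  have hG₁ : eval (fun _ ↦ 1) G ≠ 0 := by
    convert det_cayleyMenger_simplex_ne_zero (ι := ι) (K := ℝ) using 1
    rw [← hG _ fun i ↦ if_pos rfl]
    exact congrArg (eval · G) (funext fun p ↦ (if_neg p.2).symm)
  obtain ⟨q, hq, hroot⟩ := exists_mvPolynomial_of_eval_root_eq_zero hc
    (isPreconnected_dziobekPolynomial_pos S) G (y₀ := 0) (fun _ ↦ one_pos)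
    (fun p ↦ by rw [one_zpow, eval_zero_dziobekPolynomial]) hG₁
  refine ⟨q, hq, fun m z κ r h hr hz ↦ hroot _ (fun p ↦ r p.1.1 p.1.2)
    (fun p ↦ (hr _ _).lt_of_ne' (h.ne_zero p.2)) (fun p ↦ ?_) ?_⟩
  · rw [h.zpow_eq p.2, eval_dziobekPolynomial hz]
  · rw [hG r h.self_eq_zero, h.det_eq_zero]

theorem det_cayleyMenger_germ {X K : Type*} [CommRing K] (l : Filter X) (r : ι → ι → X → K) :
    (cayleyMenger fun i j ↦ (r i j : Germ l K)).det =
      ((fun x ↦ (cayleyMenger (r · · x)).det : X → K) : Germ l K) := calc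
  _ = Germ.coeRingHom l (cayleyMenger r).det := (map_det_cayleyMenger _ r).symm
  _ = _ := congrArg _ (funext fun x ↦ map_det_cayleyMenger (Pi.evalRingHom _ x) r)

theorem adjugate_cayleyMenger_germ {X K : Type*} [CommRing K] (l : Filter X)
    (r : ι → ι → X → K) (i j : Unit ⊕ ι) :
    (cayleyMenger fun i j ↦ (r i j : Germ l K)).adjugate i j =
      ((fun x ↦ (cayleyMenger (r · · x)).adjugate i j : X → K) : Germ l K) := calc
  _ = Germ.coeRingHom l ((cayleyMenger r).adjugate i j) := (map_adjugate_cayleyMenger _ r i j).symm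
  _ = _ := congrArg _ (funext fun x ↦ map_adjugate_cayleyMenger (Pi.evalRingHom _ x) r i j)

namespace IsDziobekSolution

variable {K L : Type*} [Field K] [Field L] [Algebra K L] {c : ℤ} {μ ζ : ι → L} {k : L}
  {ρ : ι → ι → L}

theorem isAlgebraic_dist (h : IsDziobekSolution c μ ζ k ρ) (hc : c ≠ 0) {A : Type*} [CommRing A]
    [IsDomain A] [Algebra A L] (hk : IsAlgebraic A k) (hζ : ∀ i, IsAlgebraic A (ζ i)) (i j : ι) :
    IsAlgebraic A (ρ i j) := by
  obtain rfl | hij := eq_or_ne i j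
  · exact h.self_eq_zero i ▸ isAlgebraic_zero
  · refine isAlgebraic_of_zpow (h.ne_zero hij) hc (h.zpow_eq hij ▸ ?_)
    exact isAlgebraic_one.add ((hk.mul (hζ i)).mul (hζ j))

theorem isAlgebraic_mass (h : IsDziobekSolution c μ ζ k ρ) {A : Type*} [CommRing A] [IsDomain A]
    [Algebra A L] (hρ : ∀ i j, IsAlgebraic A (ρ i j)) {i : ι} (hi : ζ i ≠ 0)
    (hζ : IsAlgebraic A (ζ i)) : IsAlgebraic A (μ i) := by
  obtain ⟨j, hj⟩ := h.exists_adjugate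
  have hadj : IsAlgebraic A ((cayleyMenger ρ).adjugate (.inr i) j) :=
    adjugate_cayleyMenger_mem (Subalgebra.algebraicClosure A L).toSubring hρ _ _
  exact (eq_inv_mul_iff_mul_eq₀ hi).2 (hj i) ▸ hζ.inv.mul hadj

theorem algebraicIndependent (h : IsDziobekSolution c μ ζ k ρ) (hc : c ≠ 0) {a b : ι}
    (hv : AlgebraicIndependent K fun o : Option ι ↦ o.elim (ρ a b) μ) :
    AlgebraicIndependent K fun o : Option {i | ζ i ≠ 0} ↦ o.elim k fun i ↦ ζ i := by
  classical
  -- `w` has as many members as `(ρ a b, μ)`, and all distances and masses are algebraic over it.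
  let w (o : Option ι) : L := o.elim k fun i ↦ if ζ i = 0 then μ i else ζ i
  let A := Algebra.adjoin K (Set.range w)
  have hw (o : Option ι) : IsAlgebraic A (w o) :=
    isAlgebraic_algebraMap (⟨w o, Algebra.subset_adjoin ⟨o, rfl⟩⟩ : A)
  have hζ (i : ι) : IsAlgebraic A (ζ i) := by
    obtain hi | hi := eq_or_ne (ζ i) 0
    · exact hi ▸ isAlgebraic_zero
    · simpa only [w, Option.elim_some, if_neg hi] using hw (some i)
  have hρ := h.isAlgebraic_dist hc (hw none) hζ
  have hμ (i : ι) : IsAlgebraic A (μ i) := by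
    obtain hi | hi := eq_or_ne (ζ i) 0
    · simpa only [w, Option.elim_some, if_pos hi] using hw (some i)
    · exact h.isAlgebraic_mass hρ hi (hζ i)
  have hwK : AlgebraicIndependent K w :=
    algebraicIndependent_of_isAlgebraic_adjoin le_rfl hv (Option.forall.2 ⟨hρ a b, hμ⟩)
  have hsub : (fun o : Option {i | ζ i ≠ 0} ↦ o.elim k fun i ↦ ζ i) = w ∘ Option.map (↑) :=
    funext (Option.forall.2 ⟨rfl, fun i ↦ (if_neg i.2).symm⟩)
  exact hsub ▸ hwK.comp _ (Option.map_injective Subtype.val_injective)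

theorem germ {X : Type*} {U : Ultrafilter X} {m z : ι → X → K} {κ : X → K} {r : ι → ι → X → K}
    (h : ∀ x, IsDziobekSolution c (m · x) (z · x) (κ x) (r · · x)) :
    IsDziobekSolution c (fun i ↦ (m i : Germ (U : Filter X) K)) (fun i ↦ z i) κ
      (fun i j ↦ r i j) where
  self_eq_zero i := congrArg _ (funext fun x ↦ (h x).self_eq_zero i)
  ne_zero {i j} hij hr :=
    have ⟨x, hx⟩ := (Germ.coe_eq.1 hr).exists
    (h x).ne_zero hij hx
  zpow_eq {i j} hij := congrArg _ (funext fun x ↦ (h x).zpow_eq hij)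
  det_eq_zero := by
    rw [det_cayleyMenger_germ]
    exact congrArg _ (funext fun x ↦ (h x).det_eq_zero)
  exists_adjugate := by
    obtain ⟨j, hj⟩ := Ultrafilter.eventually_exists_iff.1 <|
      Eventually.of_forall (f := U) fun x ↦ (h x).exists_adjugate
    refine ⟨j, fun i ↦ ?_⟩
    rw [adjugate_cayleyMenger_germ]
    exact Germ.coe_eq.2 (hj.mono fun x hx ↦ hx i)

end IsDziobekSolution

theorem exists_mvPolynomial_of_forall_isDziobekSolution [Nonempty ι] {X : Type*} {c : ℤ}
    (hc : c ≠ 0) {m z : ι → X → ℝ} {κ : X → ℝ} {r : ι → ι → X → ℝ}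
    (h : ∀ x, IsDziobekSolution c (m · x) (z · x) (κ x) (r · · x)) (hr : ∀ i j x, 0 ≤ r i j x)
    (a b : ι) :
    ∃ F : MvPolynomial (Option ι) ℝ,
      F ≠ 0 ∧ ∀ x, eval (fun o ↦ o.elim (r a b x) (m · x)) F = 0 := by
  by_contra! hF
  let v (o : Option ι) : X → ℝ := o.elim (r a b) m
  obtain ⟨U, hU⟩ := exists_ultrafilter_algebraicIndependent v
    (by simpa only [v, Option.elim_apply] using hF)
  simp only [v, ← Option.elim_comp fun f : X → ℝ ↦ (f : Germ (U : Filter X) ℝ)] at hU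
  let S : Set ι := {i | (z i : Germ (U : Filter X) ℝ) ≠ 0}
  have hz : ∀ᶠ x in U, ∀ i ∉ S, z i x = 0 :=
    eventually_all.2 fun i ↦ eventually_imp_distrib_left.2 fun hi ↦ Germ.coe_eq.1 (not_not.1 hi)
  obtain ⟨q, hq, hqz⟩ := exists_mvPolynomial_of_isDziobekSolution hc S
  have hind := (IsDziobekSolution.germ h (U := U)).algebraicIndependent hc hU
  refine hq (hind.eq_zero_of_aeval_eq_zero q ?_)
  let u (o : Option S) : X → ℝ := o.elim κ fun i ↦ z i
  have hu := aeval_coe_germ (U : Filter X) u q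
  simp only [u, ← Option.elim_comp fun f : X → ℝ ↦ (f : Germ (U : Filter X) ℝ),
    Option.elim_apply] at hu
  exact hu.trans (Germ.coe_eq.2 (hz.mono fun x ↦ hqz _ _ _ _ (h x) fun i j ↦ hr i j x))

end Elimination

section Finiteness

variable {n : ℕ} {c : ℤ}

theorem exists_mvPolynomial_of_mem_ccDistSet (hc : c ≠ 0) (p : PairIdx n) :
    ∃ F : MvPolynomial (Option (Fin n)) ℝ, F ≠ 0 ∧
      ∀ m : Fin n → ℝ, (∀ i, m i ≠ 0) → ∑ i, m i ≠ 0 → ∀ y ∈ ccDistSet n c m,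
        eval (fun o ↦ o.elim (y p) m) F = 0 := by
  have : Nonempty (Fin n) := ⟨p.1.1⟩
  have hn : 2 ≤ n := by have := p.2; omega
  let X := {s : (Fin n → ℝ) × (Fin n → EuclideanSpace ℝ (Fin (n - 2))) //
    (∀ i, s.1 i ≠ 0) ∧ ∑ i, s.1 i ≠ 0 ∧ Function.Injective s.2 ∧
      IsCentralConfig c s.1 (∑ i, s.1 i) s.2 ∧ confDim s.2 = n - 2}
  have hX (s : X) : ∃ z κ, IsDziobekSolution c s.1.1 z κ fun i j ↦ dist (s.1.2 i) (s.1.2 j) :=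
    have ⟨hm, hM, hinj, hx, hdim⟩ := s.2
    hx.exists_isDziobekSolution hinj (by rw [hdim, Nat.sub_add_cancel hn]) hm hM
  choose z κ hsol using hX
  obtain ⟨F, hF, hFX⟩ := exists_mvPolynomial_of_forall_isDziobekSolution hc
    (m := fun i s ↦ s.1.1 i) (z := fun i s ↦ z s i) (r := fun i j s ↦ dist (s.1.2 i) (s.1.2 j))
    hsol (fun _ _ _ ↦ dist_nonneg) p.1.1 p.1.2
  refine ⟨F, hF, fun m hm hM y ⟨x, hinj, hx, hdim, hy⟩ ↦ ?_⟩
  rw [hy p]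
  exact hFX ⟨(m, x), hm, hM, hinj, hx, hdim⟩

theorem exists_mvPolynomial_finite_ccDistSet (hn : 2 ≤ n) (hc : c ≠ 0) :
    ∃ p : MvPolynomial (Fin n) ℝ, p ≠ 0 ∧ ∀ m, eval m p ≠ 0 → (ccDistSet n c m).Finite := by
  let q : MvPolynomial (Fin n) ℝ := (∏ i, X i) * ∑ i, X i
  have hq (m : Fin n → ℝ) : eval m q ≠ 0 ↔ (∀ i, m i ≠ 0) ∧ ∑ i, m i ≠ 0 := by
    simp [q, map_prod, Finset.prod_eq_zero_iff]
  have hq0 : q ≠ 0 := fun h ↦ (hq 1).2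
    ⟨fun _ ↦ one_ne_zero, by simpa using (by omega : n ≠ 0)⟩ (by rw [h, map_zero])
  obtain ⟨p, hp, hfin⟩ := exists_mvPolynomial_finite_of_forall_coord
    (fun m ↦ {y ∈ ccDistSet n c m | eval m q ≠ 0}) fun t ↦ by
      obtain ⟨F, hF, hFy⟩ := exists_mvPolynomial_of_mem_ccDistSet hc t
      exact ⟨F, hF, fun m y ⟨hy, hm⟩ ↦ hFy m ((hq m).1 hm).1 ((hq m).1 hm).2 y hy⟩
  refine ⟨p * q, mul_ne_zero hp hq0, fun m hm ↦ ?_⟩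
  rw [map_mul] at hm
  exact (hfin m (left_ne_zero_of_mul hm)).subset fun y hy ↦ ⟨hy, right_ne_zero_of_mul hm⟩

theorem statement18_general (hn : 2 ≤ n) (hc : c ≠ 0) :
    ∃ B : Set (Fin n → ℝ),
      (∃ T : Finset (MvPolynomial (Fin n) ℝ), (∀ p ∈ T, p ≠ 0) ∧
        B = {m | ∀ p ∈ T, eval m p = 0}) ∧
      B ≠ Set.univ ∧ ∀ m : Fin n → ℝ, m ∉ B → (ccDistSet n c m).Finite := by
  obtain ⟨p, hp, hfin⟩ := exists_mvPolynomial_finite_ccDistSet hn hc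
  refine ⟨{m | eval m p = 0}, ⟨{p}, by simpa using hp, by simp⟩, fun h ↦ hp ?_, hfin⟩
  exact MvPolynomial.funext fun m ↦ by simpa using Set.eq_univ_iff_forall.1 h m

end Finiteness

/-- Let `n ≥ 4` and let `a` be a nonzero semi-integer (`c2 = 2a`).
Then there exists a proper real algebraic subset `B ⊊ ℝ^n` (the common zero set of
finitely many nonzero real polynomials) such that for every mass vector
`m ∈ ℝ^n \ B` with all `m_i > 0`, there are only finitely many `(n−2)`-dimensional
central configurations with masses `m` for the potential `U_a` up to symmetry:
the set of their mutual-distance vectors (with the normalization `λ = M`) is finite. -/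
theorem statement18 {n : ℕ} (hn : 4 ≤ n) (c2 : ℤ) (hc2 : c2 ≠ 0) :
    ∃ B : Set (Fin n → ℝ),
      (∃ T : Finset (MvPolynomial (Fin n) ℝ), (∀ p ∈ T, p ≠ 0) ∧
        B = {m | ∀ p ∈ T, MvPolynomial.eval m p = 0}) ∧
      B ≠ Set.univ ∧
      ∀ m : Fin n → ℝ, m ∉ B → (∀ i, 0 < m i) → (ccDistSet n c2 m).Finite := by
  obtain ⟨B, hB, hne, hfin⟩ := statement18_general (by omega : 2 ≤ n) hc2
  exact ⟨B, hB, hne, fun m hm _ ↦ hfin m hm⟩
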